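/- Let $K$ be a field and $n \geq 3$. The edge ideal $I(C_n)$ of the $n$-cycle is a set-theoretic complete intersection (i.e., $\operatorname{ara}\, I(C_n) = \operatorname{height}\, I(C_n)$) if and only if $n = 3$ or $n = 5$. -/

import Mathlib

open MvPolynomial

/-- Arithmetical rank: the least number of elements of `R` generating `I` up to radical. -/
noncomputable def araRank {R : Type} [CommRing R] (I : Ideal R) : ℕ :=
  sInf {s : ℕ | ∃ f : Fin s → R, (Ideal.span (Set.range f)).radical = I.radical}

/-- The edge ideal `I(Cₙ) = (x₁x₂, x₂x₃, …, x_{n-1}xₙ, x₁xₙ)` of the `n`-cycle,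
with the vertices `x₁,…,xₙ` of the cycle indexed by `ZMod n` (`xⱼ = X (j : ZMod n)`). -/
noncomputable def cycleIdeal (K : Type) [Field K] (n : ℕ) :
    Ideal (MvPolynomial (ZMod n) K) :=
  Ideal.span (Set.range fun i : ZMod n => X i * X (i + 1))

/-- `xⱼ`, the `j`-th variable of the polynomial ring (indices taken mod `n`). -/
noncomputable def xv (K : Type) [Field K] (n : ℕ) (j : ℕ) : MvPolynomial (ZMod n) K :=
  X (j : ZMod n)

/-- The height of an ideal: the infimum of the heights of the primes containing it. -/
noncomputable def idealHeight {R : Type} [CommRing R] (I : Ideal R) : ℕ∞ :=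
  ⨅ (p : PrimeSpectrum R) (_ : I ≤ p.asIdeal), Order.height p

/-!
The height of `I(Cₙ)` is the least size `⌈n / 2⌉` of a vertex cover of the cycle, and the
arithmetical rank is at least the height of every minimal prime. For `n = 6` and `n ≥ 8` some
minimal vertex cover has more than `⌈n / 2⌉` vertices.

For `n = 4` and `n = 7` the bound is cohomological. The Čech cohomology of a finite family of
elements depends only on the radical of the ideal they generate, and vanishes in degrees at least
the number of elements. A homomorphism from simplices on the edges to a standard simplex provides
a Čech cocycle of multidegree `(-1, …, -1)` for the edge ideal. If it were a coboundary, then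
comparing components of that multidegree would give a `K`-valued cochain, supported on the
families of edges covering all vertices, whose coboundary is the pulled back orientation; the
equations at two (for `n = 4`) or three (for `n = 7`) simplices are already contradictory.

For `n = 3` and `n = 5` there are explicit generators up to radical; a prime containing
`a + b` and `a * b` contains `a` and `b`.
-/

section ArithmeticalRank

variable {R : Type} [CommRing R] {I p : Ideal R} {r : ℕ}

lemma araRank_le (f : Fin r → R) (hf : ∀ i, f i ∈ I)
    (h : ∀ p : Ideal R, p.IsPrime → (∀ i, f i ∈ p) → I ≤ p) : araRank I ≤ r := by
  refine Nat.sInf_le ⟨f, le_antisymm (Ideal.radical_mono ?_) (Ideal.radical_le_radical_iff.2 ?_)⟩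
  · exact Ideal.span_le.2 (Set.range_subset_iff.2 hf)
  · rw [Ideal.radical_eq_sInf]
    exact le_sInf fun p hp => h p hp.2 fun i => hp.1 (Ideal.subset_span ⟨i, rfl⟩)

lemma idealHeight_le [hp : p.IsPrime] (h : I ≤ p) : idealHeight I ≤ p.height :=
  (iInf₂_le (⟨p, hp⟩ : PrimeSpectrum R) h).trans (PrimeSpectrum.height_eq_orderHeight _).ge

lemma le_idealHeight {m : ℕ∞} (h : ∀ p : Ideal R, p.IsPrime → I ≤ p → m ≤ p.height) :
    m ≤ idealHeight I :=
  le_iInf₂ fun p hp => (h _ p.isPrime hp).trans (PrimeSpectrum.height_eq_orderHeight p).le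

variable [IsNoetherianRing R]

lemma exists_radical_span_range_eq (I : Ideal R) :
    ∃ f : Fin (araRank I) → R, (Ideal.span (Set.range f)).radical = I.radical := by
  obtain ⟨s, f, hf⟩ := Submodule.fg_iff_exists_fin_generating_family.1 (IsNoetherian.noetherian I)
  exact Nat.sInf_mem (s := {s : ℕ | ∃ f : Fin s → R, _}) ⟨s, f, congrArg Ideal.radical hf⟩

/-- A minimal prime of `I` is also minimal over the ideal of any family generating `I` up to
radical, so Krull's height theorem applies. -/
lemma height_le_araRank (hp : p ∈ I.minimalPrimes) : p.height ≤ araRank I := by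
  obtain ⟨f, hf⟩ := exists_radical_span_range_eq I
  rw [← Ideal.radical_minimalPrimes, ← hf, Ideal.radical_minimalPrimes] at hp
  refine (Ideal.height_le_card_of_mem_minimalPrimes_span (Set.finite_range f) hp).trans ?_
  rw [Nat.cast_le, ← Set.image_univ]
  exact (Set.ncard_image_le Set.finite_univ).trans (by simp)

lemma idealHeight_le_araRank (hI : I ≠ ⊤) : idealHeight I ≤ araRank I := by
  obtain ⟨p, hp⟩ := Ideal.nonempty_minimalPrimes hI
  have := hp.1.1
  exact (idealHeight_le hp.1.2).trans (height_le_araRank hp)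

end ArithmeticalRank

section VarIdeal

variable {K σ : Type*} [CommRing K]

variable (K) in
/-- The ideal generated by the variables indexed by `s`. -/
noncomputable def varIdeal (s : Set σ) : Ideal (MvPolynomial σ K) := Ideal.span (X '' s)

lemma varIdeal_le_iff {s : Set σ} {I : Ideal (MvPolynomial σ K)} :
    varIdeal K s ≤ I ↔ ∀ v ∈ s, X v ∈ I :=
  Ideal.span_le.trans Set.image_subset_iff

lemma X_mem_varIdeal [Nontrivial K] {s : Set σ} {v : σ} : X v ∈ varIdeal K s ↔ v ∈ s := by
  classical
  simp [varIdeal, mem_ideal_span_X_image, support_X, Finsupp.single_apply]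

open Classical in
lemma varIdeal_eq_ker (s : Set σ) : varIdeal K s =
    RingHom.ker (aeval (R := K) fun v => if v ∈ s then 0 else (X v : MvPolynomial σ K)) := by
  refine le_antisymm (varIdeal_le_iff.2 fun v hv => by simp [RingHom.mem_ker, hv]) fun f hf => ?_
  have hmk : (Ideal.Quotient.mkₐ K (varIdeal K s)).comp
      (aeval (R := K) fun v => if v ∈ s then 0 else (X v : MvPolynomial σ K)) =
      Ideal.Quotient.mkₐ K (varIdeal K s) := by
    ext v
    by_cases hv : v ∈ s
    · simpa [hv] using (Ideal.Quotient.eq_zero_iff_mem.2 (varIdeal_le_iff.1 le_rfl v hv)).symm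
    · simp [hv]
  rw [← Ideal.Quotient.eq_zero_iff_mem, ← Ideal.Quotient.mkₐ_eq_mk K, ← hmk, AlgHom.comp_apply,
    RingHom.mem_ker.1 hf, map_zero]

variable [IsDomain K]

instance varIdeal_isPrime (s : Set σ) : (varIdeal K s).IsPrime := by
  classical
  rw [varIdeal_eq_ker]
  exact RingHom.ker_isPrime _

lemma card_le_height_varIdeal (s : Finset σ) : s.card ≤ (varIdeal K (s : Set σ)).height := by
  classical
  induction s using Finset.induction_on with
  | empty => simp
  | insert v s hv ih =>
    have hlt : varIdeal K (s : Set σ) < varIdeal K (insert v s : Finset σ) := by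
      refine lt_of_le_not_ge (varIdeal_le_iff.2 fun w hw => X_mem_varIdeal.2 ?_) fun h => hv ?_
      · exact Finset.mem_insert_of_mem hw
      · exact X_mem_varIdeal.1 (h (X_mem_varIdeal.2 (Finset.mem_insert_self v s)))
    rw [Finset.card_insert_of_notMem hv, Nat.cast_succ]
    exact (add_le_add_left ih 1).trans (Ideal.height_add_one_le_of_lt_of_isPrime hlt)

lemma height_varIdeal_le_card [Finite σ] [IsNoetherianRing K] (s : Finset σ) :
    (varIdeal K (s : Set σ)).height ≤ s.card := by
  refine (Ideal.height_le_card_of_mem_minimalPrimes_span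
    (s.finite_toSet.image (X : σ → MvPolynomial σ K)) ?_).trans ?_
  · exact Ideal.minimalPrimes_eq_subsingleton_self (I := varIdeal K (s : Set σ)) ▸ rfl
  · exact Nat.cast_le.2 ((Set.ncard_image_le s.finite_toSet).trans (by simp))

end VarIdeal

section SqfreeMonomial

variable {K σ : Type*} [CommRing K]

variable (K) in
/-- The squarefree monomial with support `s`. -/
noncomputable def sqfreeMonomial (s : Finset σ) : MvPolynomial σ K := ∏ v ∈ s, X v

lemma sqfreeMonomial_univ_pow [Fintype σ] (N : ℕ) :
    sqfreeMonomial K (Finset.univ : Finset σ) ^ N =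
      monomial (Finsupp.equivFunOnFinite.symm fun _ => N) 1 := by
  rw [monomial_eq, Finsupp.prod_fintype _ _ (by simp), sqfreeMonomial, ← Finset.prod_pow]
  simp

variable [IsDomain K]

lemma X_dvd_sqfreeMonomial {s : Finset σ} {v : σ} :
    (X v : MvPolynomial σ K) ∣ sqfreeMonomial K s ↔ v ∈ s := by
  refine ⟨fun h => ?_, Finset.dvd_prod_of_mem X⟩
  obtain ⟨w, hw, hvw⟩ := (X_prime (R := K)).dvd_finsetProd_iff X |>.1 h
  rwa [X_dvd_X.1 hvw]

lemma sqfreeMonomial_injective :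
    Function.Injective (sqfreeMonomial K : Finset σ → MvPolynomial σ K) := fun s t h =>
  Finset.ext fun v => by rw [← X_dvd_sqfreeMonomial (K := K), h, X_dvd_sqfreeMonomial]

lemma sqfreeMonomial_ne_zero (s : Finset σ) : sqfreeMonomial K s ≠ 0 :=
  Finset.prod_ne_zero_iff.2 fun v _ => X_ne_zero v

lemma sqfreeMonomial_dvd {s : Finset σ} {p : MvPolynomial σ K} (h : ∀ v ∈ s, X v ∣ p) :
    sqfreeMonomial K s ∣ p := by
  classical
  induction s using Finset.induction_on with
  | empty => exact one_dvd p
  | insert v s hv ih =>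
    obtain ⟨hvp, hsp⟩ := (Finset.forall_mem_insert _ _ _).1 h
    obtain ⟨q, rfl⟩ := ih hsp
    have hvq := (X_prime.dvd_or_dvd hvp).resolve_left (mt X_dvd_sqfreeMonomial.1 hv)
    rw [sqfreeMonomial, Finset.prod_insert hv, mul_comm]
    exact mul_dvd_mul_left (sqfreeMonomial K s) hvq

end SqfreeMonomial

section EdgeIdeal

variable {K σ ι : Type*} [CommRing K] {E : ι → Finset σ}

variable (K) in
/-- The edge ideal of the hypergraph with edges `E i`. -/
noncomputable def edgeIdeal (E : ι → Finset σ) : Ideal (MvPolynomial σ K) :=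
  Ideal.span (Set.range (sqfreeMonomial K ∘ E))

/-- The transversals, or vertex covers, of the hypergraph with edges `E i`. -/
def IsTransversal (E : ι → Finset σ) (s : Set σ) : Prop := ∀ i, ∃ v ∈ E i, v ∈ s

lemma IsTransversal.minimal {s : Set σ} (hs : IsTransversal E s)
    (h : ∀ v ∈ s, ∃ i, ∀ w ∈ E i, w ∈ s → w = v) : Minimal (IsTransversal E) s := by
  refine ⟨hs, fun t ht hts v hv => ?_⟩
  obtain ⟨i, hi⟩ := h v hv
  obtain ⟨w, hw, hwt⟩ := ht i
  exact hi w hw (hts hwt) ▸ hwt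

lemma edgeIdeal_le_iff {p : Ideal (MvPolynomial σ K)} [p.IsPrime] :
    edgeIdeal K E ≤ p ↔ IsTransversal E {v | X v ∈ p} := by
  simp [edgeIdeal, Ideal.span_le, Set.range_subset_iff, sqfreeMonomial, IsTransversal,
    Ideal.IsPrime.prod_mem_iff]

variable [IsDomain K]

lemma edgeIdeal_le_varIdeal_iff {s : Set σ} : edgeIdeal K E ≤ varIdeal K s ↔ IsTransversal E s := by
  rw [edgeIdeal_le_iff]
  simp only [X_mem_varIdeal, Set.ofPred_mem_eq]

lemma varIdeal_mem_minimalPrimes {s : Set σ} (hs : Minimal (IsTransversal E) s) :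
    varIdeal K s ∈ (edgeIdeal K E).minimalPrimes := by
  refine ⟨⟨inferInstance, edgeIdeal_le_varIdeal_iff.2 hs.prop⟩, fun p ⟨hp, hEp⟩ hps => ?_⟩
  exact varIdeal_le_iff.2 <|
    hs.le_of_le (edgeIdeal_le_iff.1 hEp) fun v hv => X_mem_varIdeal.1 (hps hv)

end EdgeIdeal

section HeightEdgeIdeal

variable {K σ : Type} [CommRing K] [IsDomain K] {ι : Type*} {E : ι → Finset σ} {s : Finset σ}

lemma le_idealHeight_edgeIdeal [Finite σ] {m : ℕ}
    (h : ∀ s : Finset σ, IsTransversal E s → m ≤ s.card) :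
    m ≤ idealHeight (edgeIdeal K E) := by
  refine le_idealHeight fun p _ hp => ?_
  let s := (Set.toFinite {v | (X v : MvPolynomial σ K) ∈ p}).toFinset
  have hs : IsTransversal E s := by simpa [s] using edgeIdeal_le_iff.1 hp
  exact (Nat.cast_le.2 (h s hs)).trans <| (card_le_height_varIdeal s).trans <| Ideal.height_mono <|
    varIdeal_le_iff.2 fun v hv => by simpa [s] using hv

variable [Finite σ] [IsNoetherianRing K]

lemma idealHeight_edgeIdeal_le (hs : IsTransversal E s) : idealHeight (edgeIdeal K E) ≤ s.card :=
  (idealHeight_le (edgeIdeal_le_varIdeal_iff.2 hs)).trans (height_varIdeal_le_card s)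

lemma card_le_araRank_edgeIdeal (hs : Minimal (IsTransversal E) (s : Set σ)) :
    s.card ≤ araRank (edgeIdeal K E) :=
  Nat.cast_le.1 <| (card_le_height_varIdeal s).trans <|
    height_le_araRank (varIdeal_mem_minimalPrimes (K := K) hs)

end HeightEdgeIdeal

section AlternatingCochains

variable (F : Type*) {ι : Type*} [CommRing F] {k : ℕ}

/-- Alternating `k`-cochains with coefficients in `F` on the full simplex with vertex set `ι`: the
value of `c` at the oriented simplex `(s 0, …, s (k - 1))` is `c (basisTuple F s)`. -/
abbrev AltCochain (ι : Type*) (k : ℕ) : Type _ := (ι →₀ F) [⋀^Fin k]→ₗ[F] F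

/-- The tuple of standard basis vectors attached to an oriented simplex. -/
noncomputable def basisTuple (s : Fin k → ι) (j : Fin k) : ι →₀ F := Finsupp.single (s j) 1

/-- The sum of the coordinates. -/
noncomputable def coordSum : (ι →₀ F) →ₗ[F] F := Finsupp.linearCombination F fun _ => 1

/-- The simplicial coboundary, encoded as the exterior product with the linear form `coordSum`. -/
noncomputable def coboundary : AltCochain F ι k →ₗ[F] AltCochain F ι (k + 1) :=
  AlternatingMap.alternatizeUncurryFinLM ∘ₗ LinearMap.smulRightₗ (coordSum F)

/-- The `k`-cochains vanishing on all simplices with vertices in `A`. -/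
def vanishingOn (A : Set ι) (k : ℕ) : Submodule F (AltCochain F ι k) where
  carrier := {c | ∀ s : Fin k → ι, (∀ j, s j ∈ A) → c (basisTuple F s) = 0}
  zero_mem' _ _ := rfl
  add_mem' hb hc s hs := by rw [AlternatingMap.add_apply, hb s hs, hc s hs, add_zero]
  smul_mem' a c hc s hs := by rw [AlternatingMap.smul_apply, hc s hs, smul_zero]

open Classical in
/-- The cochain agreeing with `c` on the simplices with vertices in `A` and vanishing on all
others. -/
noncomputable def extendByZero (A : Set ι) (c : AltCochain F ι k) : AltCochain F ι k :=
  c.compLinearMap ((Finsupp.supported F F A).subtype ∘ₗ Finsupp.restrictDom F F A)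

variable {F}

@[simp]
lemma coordSum_single (i : ι) (a : F) : coordSum F (Finsupp.single i a) = a := by
  simp [coordSum]

lemma basisTuple_cons (i : ι) (s : Fin k → ι) :
    basisTuple F (Fin.cons i s : Fin (k + 1) → ι) =
      Matrix.vecCons (Finsupp.single i 1) (basisTuple F s) := by
  funext j
  cases j using Fin.cases <;> rfl

lemma coboundary_apply (c : AltCochain F ι k) (v : Fin (k + 1) → ι →₀ F) :
    coboundary F c v =
      ∑ j : Fin (k + 1), (-1) ^ (j : ℕ) * coordSum F (v j) * c (j.removeNth v) := by
  simp [coboundary, AlternatingMap.alternatizeUncurryFin_apply, mul_assoc]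

lemma coboundary_basisTuple (c : AltCochain F ι k) (s : Fin (k + 1) → ι) :
    coboundary F c (basisTuple F s) =
      ∑ j : Fin (k + 1), (-1) ^ (j : ℕ) * c (basisTuple F (s ∘ j.succAbove)) := by
  simp only [coboundary_apply, basisTuple, coordSum_single, mul_one]
  rfl

lemma coboundary_coboundary (c : AltCochain F ι k) : coboundary F (coboundary F c) = 0 := by
  let f := (coordSum F (ι := ι)).smulRight ((coordSum F (ι := ι)).smulRight c)
  have hf : (coordSum F).smulRight (coboundary F c) = AlternatingMap.alternatizeUncurryFinLM ∘ₗ f :=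
    LinearMap.ext fun x => (map_smul AlternatingMap.alternatizeUncurryFinLM (coordSum F x) _).symm
  exact (congrArg AlternatingMap.alternatizeUncurryFin hf).trans <|
    AlternatingMap.alternatizeUncurryFin_alternatizeUncurryFinLM_comp_of_symmetric fun x y =>
      smul_comm (coordSum F x) (coordSum F y) c

lemma coboundary_curryLeft_add (c : AltCochain F ι (k + 1)) (w : ι →₀ F) :
    coboundary F (c.curryLeft w) + (coboundary F c).curryLeft w = coordSum F w • c := by
  ext v
  have hcurry (j : Fin (k + 1)) : Fin.removeNth j.succ (Matrix.vecCons w v : Fin (k + 2) → ι →₀ F) =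
      Matrix.vecCons w (j.removeNth v) :=
    Fin.cons_comp_succ_succAbove w v j
  simp [coboundary_apply, Fin.sum_univ_succ (n := k + 1), hcurry, pow_succ]

lemma vanishingOn_anti {A B : Set ι} (h : A ⊆ B) : vanishingOn F B k ≤ vanishingOn F A k :=
  fun _ hc s hs => hc s fun j => h (hs j)

lemma mem_vanishingOn_of_ncard_lt {A : Set ι} (hA : A.Finite) (hk : A.ncard < k)
    (c : AltCochain F ι k) : c ∈ vanishingOn F A k := fun s hs => by
  refine c.map_eq_zero_of_not_injective _ fun hinj => hk.not_ge ?_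
  have hs_inj : Function.Injective s := fun i j hij => hinj (by simp only [basisTuple, hij])
  calc k = (Set.range s).ncard := by
        simp [← Set.image_univ, Set.ncard_image_of_injective _ hs_inj, Set.ncard_univ]
    _ ≤ A.ncard := Set.ncard_le_ncard (Set.range_subset_iff.2 hs) hA

lemma curryLeft_sum_single (c : AltCochain F ι (k + 1)) (A : Finset ι) (w : ι → F) (s : Fin k → ι) :
    c.curryLeft (∑ i ∈ A, Finsupp.single i (w i)) (basisTuple F s) =
      ∑ i ∈ A, w i * c (basisTuple F (Fin.cons i s)) := by
  have hsingle (i : ι) : Finsupp.single i (w i) = w i • Finsupp.single i (1 : F) := by simp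
  classical
  induction A using Finset.induction_on with
  | empty => simp
  | insert i A hi ih =>
    rw [Finset.sum_insert hi, Finset.sum_insert hi, map_add, AlternatingMap.add_apply, ih, hsingle,
      map_smul, AlternatingMap.smul_apply, AlternatingMap.curryLeft_apply_apply, basisTuple_cons,
      smul_eq_mul]

lemma curryLeft_mem_vanishingOn {A : Set ι} {c : AltCochain F ι (k + 1)}
    (hc : c ∈ vanishingOn F A (k + 1)) {T : Finset ι} (w : ι → F) (hT : ∀ i ∈ T, i ∈ A) :
    c.curryLeft (∑ i ∈ T, Finsupp.single i (w i)) ∈ vanishingOn F A k := fun s hs => by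
  rw [curryLeft_sum_single]
  refine Finset.sum_eq_zero fun i hi => ?_
  rw [hc (Fin.cons i s) (Fin.cases (hT i hi) hs), mul_zero]

lemma coboundary_mem_vanishingOn {A : Set ι} {c : AltCochain F ι k} (hc : c ∈ vanishingOn F A k) :
    coboundary F c ∈ vanishingOn F A (k + 1) := fun s hs => by
  rw [coboundary_basisTuple]
  exact Finset.sum_eq_zero fun j _ => by rw [hc (s ∘ j.succAbove) fun _ => hs _, mul_zero]

open Classical in
lemma extendByZero_basisTuple_of_mem {A : Set ι} (c : AltCochain F ι k) {s : Fin k → ι}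
    (hs : ∀ j, s j ∈ A) : extendByZero F A c (basisTuple F s) = c (basisTuple F s) := by
  refine congrArg c (funext fun j => ?_)
  exact Finsupp.filter_single_of_pos (· ∈ A) (hs j)

open Classical in
lemma extendByZero_basisTuple_of_notMem {A : Set ι} (c : AltCochain F ι k) {s : Fin k → ι}
    {j : Fin k} (hs : s j ∉ A) : extendByZero F A c (basisTuple F s) = 0 :=
  c.map_coord_zero j (Finsupp.filter_single_of_neg (· ∈ A) hs)

lemma sub_extendByZero_mem_vanishingOn (A : Set ι) (c : AltCochain F ι k) :
    c - extendByZero F A c ∈ vanishingOn F A k := fun s hs => by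
  rw [AlternatingMap.sub_apply, extendByZero_basisTuple_of_mem c hs, sub_self]

end AlternatingCochains

section Cech

variable {R : Type*} [CommRing R]

variable (R) in
/-- The elements of `F` sent into the image of `R` by a power of `u`, i.e. the image of the
localization of `R` away from `u` when `u` is a unit in `F`. -/
def awayIn (F : Type*) [CommRing F] [Algebra R F] (u : R) : Submodule R F where
  carrier := {y | ∀ᶠ N in Filter.atTop, u ^ N • y ∈ (1 : Submodule R F)}
  zero_mem' := Filter.Eventually.of_forall fun N => by rw [smul_zero]; exact zero_mem _
  add_mem' hx hy := by
    filter_upwards [hx, hy] with N hxN hyN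
    rw [smul_add]
    exact add_mem hxN hyN
  smul_mem' a x hx := by
    filter_upwards [hx] with N hN
    rw [smul_comm]
    exact Submodule.smul_mem _ a hN

section CommRing

variable {F : Type*} [CommRing F] [Algebra R F] {u v : R} {y : F} {k : ℕ}

lemma one_le_awayIn : (1 : Submodule R F) ≤ awayIn R F u := fun _ hy =>
  Filter.Eventually.of_forall fun N => Submodule.smul_mem _ (u ^ N) hy

lemma mem_awayIn_of_pow_smul_mem {M : ℕ} (huv : u ∣ v) (hy : u ^ M • y ∈ awayIn R F v) :
    y ∈ awayIn R F v := by
  obtain ⟨t, rfl⟩ := huv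
  obtain ⟨N, hN⟩ := Filter.eventually_atTop.1 hy
  refine Filter.eventually_atTop.2 ⟨N + M, fun L hL => ?_⟩
  obtain ⟨L, rfl⟩ := Nat.exists_eq_add_of_le' (le_of_add_le_right hL)
  have hpow : (u * t) ^ (L + M) = t ^ M * ((u * t) ^ L * u ^ M) := by ring
  rw [hpow, mul_smul, mul_smul]
  exact Submodule.smul_mem _ _ (hN L (by omega))

lemma awayIn_mono (h : u ∣ v) : awayIn R F u ≤ awayIn R F v := by
  obtain ⟨t, rfl⟩ := h
  intro y hy
  filter_upwards [hy] with N hN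
  rw [mul_pow, mul_comm, mul_smul]
  exact Submodule.smul_mem _ _ hN

lemma eventually_pow_smul_mem_awayIn (h : y ∈ awayIn R F (u * v)) :
    ∀ᶠ N in Filter.atTop, u ^ N • y ∈ awayIn R F v := by
  filter_upwards [h] with N hN
  refine mem_awayIn_of_pow_smul_mem (M := N) dvd_rfl (one_le_awayIn ?_)
  rwa [smul_smul, ← mul_pow, mul_comm]

variable (F) in
/-- The degree `k` Čech cochains of the family of all elements of `A`, with values in `F`: the value
at the simplex `s` lies in the localization away from the product of its vertices. -/
def cechCochain (A : Set R) (k : ℕ) : Submodule R (AltCochain F R k) where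
  carrier := {c | ∀ s : Fin k → R, (∀ j, s j ∈ A) → c (basisTuple F s) ∈ awayIn R F (∏ j, s j)}
  zero_mem' _ _ := zero_mem _
  add_mem' hb hc s hs := add_mem (hb s hs) (hc s hs)
  smul_mem' a _ hc s hs := Submodule.smul_mem _ a (hc s hs)

variable (F) in
/-- Exactness of the Čech complex of the elements of `A` at the cochains on `k + 1`-tuples. Cochains
are defined on tuples from all of `R`, hence equations hold only up to `vanishingOn F A`. -/
def CechVanishes (A : Set R) (k : ℕ) : Prop :=
  ∀ c ∈ cechCochain F A (k + 1), coboundary F c ∈ vanishingOn F A (k + 2) →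
    ∃ b ∈ cechCochain F A k, c - coboundary F b ∈ vanishingOn F A (k + 1)

lemma cechCochain_anti {A B : Set R} (h : A ⊆ B) : cechCochain F B k ≤ cechCochain F A k :=
  fun _ hc s hs => hc s fun j => h (hs j)

lemma coboundary_mem_cechCochain {A : Set R} {c : AltCochain F R k} (hc : c ∈ cechCochain F A k) :
    coboundary F c ∈ cechCochain F A (k + 1) := fun s hs => by
  rw [coboundary_basisTuple]
  refine sum_mem fun j _ => ?_
  have hj : c (basisTuple F (s ∘ j.succAbove)) ∈ awayIn R F (∏ j, s j) := by
    refine awayIn_mono ?_ (hc (s ∘ j.succAbove) fun _ => hs _)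
    rw [Fin.prod_univ_succAbove _ j]
    exact dvd_mul_left _ _
  have := (awayIn R F (∏ j, s j)).smul_mem ((-1) ^ (j : ℕ)) hj
  rwa [Algebra.smul_def, map_pow, map_neg, map_one] at this

lemma extendByZero_mem_cechCochain {A : Set R} (B : Set R) {c : AltCochain F R k}
    (hc : c ∈ cechCochain F A k) : extendByZero F A c ∈ cechCochain F B k := fun s _ => by
  by_cases hs : ∀ j, s j ∈ A
  · rw [extendByZero_basisTuple_of_mem c hs]
    exact hc s hs
  · obtain ⟨j, hj⟩ := not_forall.1 hs
    rw [extendByZero_basisTuple_of_notMem c hj]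
    exact zero_mem _

lemma cechVanishes_of_ncard_le {A : Set R} (hA : A.Finite) (h : A.ncard ≤ k) :
    CechVanishes F A k :=
  fun _ _ _ => ⟨0, zero_mem _, mem_vanishingOn_of_ncard_lt hA (by omega) _⟩

lemma eventually_pow_smul_cons_mem_awayIn {A : Set R} (hA : A.Finite) {c : AltCochain F R (k + 1)}
    (hc : c ∈ cechCochain F A (k + 1)) : ∀ᶠ N in Filter.atTop, ∀ i ∈ A, ∀ s : Fin k → R,
      (∀ j, s j ∈ A) → i ^ N • c (basisTuple F (Fin.cons i s)) ∈ awayIn R F (∏ j, s j) := by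
  have := hA.to_subtype
  have hev : ∀ᶠ N in Filter.atTop, ∀ (i : A) (s : Fin k → A),
      (i : R) ^ N • c (basisTuple F (Fin.cons (i : R) fun j => (s j : R))) ∈
        awayIn R F (∏ j, (s j : R)) := by
    refine Filter.eventually_all.2 fun i => Filter.eventually_all.2 fun s =>
      eventually_pow_smul_mem_awayIn ?_
    have := hc (Fin.cons (i : R) fun j => (s j : R)) (Fin.cases i.2 fun j => (s j).2)
    rwa [Fin.prod_cons] at this
  filter_upwards [hev] with N hN i hi s hs
  exact hN ⟨i, hi⟩ fun j => ⟨s j, hs j⟩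

end CommRing

lemma exists_pow_eq_sum_mul_pow {A : Finset R} {x : R} (hx : x ∈ (Ideal.span (A : Set R)).radical)
    (N : ℕ) : ∃ M : ℕ, ∃ r : R → R, x ^ M = ∑ i ∈ A, r i * i ^ N := by
  have hle : Ideal.span (A : Set R) ≤ (Ideal.span ((· ^ N) '' (A : Set R))).radical :=
    Ideal.span_le.2 fun i hi => ⟨N, Ideal.subset_span ⟨i, hi, rfl⟩⟩
  obtain ⟨M, hM⟩ := Ideal.radical_le_radical_iff.2 hle hx
  obtain ⟨r, hr⟩ := (Submodule.mem_span_image_finset_iff_exists_fun' R).1 hM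
  exact ⟨M, r, by simpa using hr.symm⟩

section Field

variable {F : Type*} [Field F] [Algebra R F] [FaithfulSMul R F] {A B : Set R} {h : R} {k : ℕ}

/-- Writing `h ^ M = ∑ i ∈ A, r i * i ^ N`, contraction with the family `r i * i ^ N / h ^ M`, whose
coordinates add up to `1`, is a contracting homotopy. -/
lemma exists_coboundary_eq_of_mem_vanishingOn (hA : A.Finite) (h0 : h ≠ 0)
    (hrad : h ∈ (Ideal.span A).radical) {c : AltCochain F R (k + 1)}
    (hc : c ∈ cechCochain F (insert h A) (k + 1)) (hcA : c ∈ vanishingOn F A (k + 1))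
    (hdc : coboundary F c ∈ vanishingOn F (insert h A) (k + 2)) :
    ∃ b ∈ cechCochain F (insert h A) k, b ∈ vanishingOn F A k ∧
      c - coboundary F b ∈ vanishingOn F (insert h A) (k + 1) := by
  obtain ⟨N, hN⟩ := (eventually_pow_smul_cons_mem_awayIn (hA.insert h) hc).exists
  obtain ⟨M, r, hr⟩ := exists_pow_eq_sum_mul_pow (A := hA.toFinset) (by simpa using hrad) N
  have hM : algebraMap R F (h ^ M) ≠ 0 := by
    rw [map_pow]
    exact pow_ne_zero M (by rwa [Ne, FaithfulSMul.algebraMap_eq_zero_iff])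
  let w : R →₀ F := ∑ i ∈ hA.toFinset,
    Finsupp.single i (algebraMap R F (r i * i ^ N) / algebraMap R F (h ^ M))
  have hw : coordSum F w = 1 := by
    simp only [w, map_sum, coordSum_single]
    rw [← Finset.sum_div, ← map_sum, ← hr, div_self hM]
  have hbA : c.curryLeft w ∈ vanishingOn F A k :=
    curryLeft_mem_vanishingOn hcA _ fun i hi => by simpa using hi
  refine ⟨c.curryLeft w, fun s hs => ?_, hbA, ?_⟩
  · by_cases hsA : ∀ j, s j ∈ A
    · rw [hbA s hsA]
      exact zero_mem _
    have hdvd : h ∣ ∏ j, s j := by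
      obtain ⟨j, hj⟩ := not_forall.1 hsA
      exact (hs j).resolve_right hj ▸ Finset.dvd_prod_of_mem s (Finset.mem_univ j)
    rw [curryLeft_sum_single]
    refine sum_mem fun i hi => mem_awayIn_of_pow_smul_mem (M := M) hdvd ?_
    have hi : i ∈ A := by simpa using hi
    convert Submodule.smul_mem _ (r i) (hN i (Set.mem_insert_of_mem h hi) s hs) using 1
    simp only [Algebra.smul_def, map_mul]
    field_simp
  · have hdw : (coboundary F c).curryLeft w ∈ vanishingOn F (insert h A) (k + 1) :=
      curryLeft_mem_vanishingOn hdc _ fun i hi => Set.mem_insert_of_mem h (by simpa using hi)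
    have hhom := coboundary_curryLeft_add c w
    rw [hw, one_smul] at hhom
    rwa [sub_eq_of_eq_add' hhom.symm]

lemma cechVanishes_insert_iff (hA : A.Finite) (h0 : h ≠ 0) (hrad : h ∈ (Ideal.span A).radical) :
    CechVanishes F (insert h A) k ↔ CechVanishes F A k := by
  have hins := Set.subset_insert h A
  constructor
  · intro hV c hc hdc
    have hc' := extendByZero_mem_cechCochain (insert h A) hc
    have hdc' : coboundary F (extendByZero F A c) ∈ vanishingOn F A (k + 2) := by
      simpa using sub_mem hdc (coboundary_mem_vanishingOn (sub_extendByZero_mem_vanishingOn A c))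
    obtain ⟨b, hb, hbA, hdb⟩ := exists_coboundary_eq_of_mem_vanishingOn hA h0 hrad
      (coboundary_mem_cechCochain hc') hdc' (by rw [coboundary_coboundary]; exact zero_mem _)
    obtain ⟨e, he, hde⟩ := hV (extendByZero F A c - b) (sub_mem hc' hb) (by simpa using hdb)
    refine ⟨e, cechCochain_anti hins he, ?_⟩
    have hsplit : c - coboundary F e =
        (c - extendByZero F A c) + b + (extendByZero F A c - b - coboundary F e) := by abel
    rw [hsplit]
    exact add_mem (add_mem (sub_extendByZero_mem_vanishingOn A c) hbA) (vanishingOn_anti hins hde)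
  · intro hV c hc hdc
    obtain ⟨a, ha, hca⟩ := hV c (cechCochain_anti hins hc) (vanishingOn_anti hins hdc)
    have ha' := extendByZero_mem_cechCochain (insert h A) ha
    have hca' : c - coboundary F (extendByZero F A a) ∈ vanishingOn F A (k + 1) := by
      simpa using add_mem hca (coboundary_mem_vanishingOn (sub_extendByZero_mem_vanishingOn A a))
    obtain ⟨b, hb, -, hdb⟩ := exists_coboundary_eq_of_mem_vanishingOn hA h0 hrad
      (sub_mem hc (coboundary_mem_cechCochain ha')) hca'
      (by simpa [coboundary_coboundary] using hdc)
    exact ⟨extendByZero F A a + b, add_mem ha' hb, by rwa [map_add, ← sub_sub]⟩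

lemma cechVanishes_union_iff (hA : A.Finite) (hB : B.Finite) (h0 : (0 : R) ∉ B)
    (hrad : B ⊆ (Ideal.span A).radical) : CechVanishes F (A ∪ B) k ↔ CechVanishes F A k := by
  induction B, hB using Set.Finite.induction_on with
  | empty => simp
  | @insert h B _ hB ih =>
    rw [Set.mem_insert_iff, not_or] at h0
    rw [Set.insert_subset_iff] at hrad
    rw [← ih h0.2 hrad.2, Set.union_insert]
    exact cechVanishes_insert_iff (hA.union hB) (Ne.symm h0.1)
      (Ideal.radical_mono (Ideal.span_mono Set.subset_union_left) hrad.1)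

lemma cechVanishes_iff_of_radical_eq (hA : A.Finite) (hB : B.Finite) (hA0 : (0 : R) ∉ A)
    (hB0 : (0 : R) ∉ B) (h : (Ideal.span A).radical = (Ideal.span B).radical) :
    CechVanishes F A k ↔ CechVanishes F B k := by
  rw [← cechVanishes_union_iff hA hB hB0, ← cechVanishes_union_iff hB hA hA0, Set.union_comm]
  · exact h ▸ Ideal.subset_span.trans Ideal.le_radical
  · exact h ▸ Ideal.subset_span.trans Ideal.le_radical

lemma lt_of_radical_eq_of_not_cechVanishes (hA : A.Finite) (hA0 : (0 : R) ∉ A) {r : ℕ}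
    {f : Fin r → R} (hf : (Ideal.span (Set.range f)).radical = (Ideal.span A).radical)
    (hV : ¬ CechVanishes F A k) : k < r := by
  by_contra! hr
  have hBfin : (Set.range f \ {0}).Finite := (Set.finite_range f).sdiff
  have hBcard : (Set.range f \ {0}).ncard ≤ k := calc
    _ ≤ (Set.range f).ncard := Set.ncard_le_ncard Set.sdiff_subset (Set.finite_range f)
    _ ≤ r := by simpa [← Set.image_univ] using Set.ncard_image_le (s := Set.univ) (f := f)
    _ ≤ k := hr
  refine hV <| (cechVanishes_iff_of_radical_eq hA hBfin hA0 (by simp) ?_).2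
    (cechVanishes_of_ncard_le hBfin hBcard)
  rw [← hf, Ideal.span_sdiff_singleton_zero]

end Field

end Cech

section TopForm

variable (F : Type*) [CommRing F] {ι : Type*} {k : ℕ}

/-- The orientation of the simplex with vertex set `Fin k`. -/
noncomputable def topForm (k : ℕ) : AltCochain F (Fin k) k := Finsupp.basisSingleOne.det

lemma topForm_basisTuple_id : topForm F k (basisTuple F id) = 1 := by
  have h : basisTuple F id = ⇑(Finsupp.basisSingleOne (R := F) (ι := Fin k)) := by
    funext j
    simp [basisTuple]
  rw [topForm, h, Module.Basis.det_self]

variable {F}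

lemma topForm_basisTuple_of_not_injective {t : Fin k → Fin k} (ht : ¬ Function.Injective t) :
    topForm F k (basisTuple F t) = 0 :=
  (topForm F k).map_eq_zero_of_not_injective _ fun h => ht fun i j hij =>
    h (by simp only [basisTuple, hij])

lemma map_topForm_basisTuple {F' : Type*} [CommRing F'] (f : F →+* F') (t : Fin k → Fin k) :
    f (topForm F k (basisTuple F t)) = topForm F' k (basisTuple F' t) := by
  rw [topForm, topForm, Module.Basis.det_apply, Module.Basis.det_apply, RingHom.map_det]
  congr 1
  ext i j
  simp [Module.Basis.toMatrix_apply, basisTuple, Finsupp.single_apply, apply_ite f]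

/-- The cochain taking the value of `c` at the image simplex under `f`. -/
noncomputable def pullback {ι' : Type*} (f : ι → ι') (c : AltCochain F ι' k) : AltCochain F ι k :=
  c.compLinearMap (Finsupp.lmapDomain F F f)

@[simp]
lemma pullback_basisTuple {ι' : Type*} (f : ι → ι') (c : AltCochain F ι' k) (s : Fin k → ι) :
    pullback f c (basisTuple F s) = c (basisTuple F (f ∘ s)) :=
  congrArg c (funext fun _ => Finsupp.mapDomain_single)

lemma coboundary_pullback_topForm_mem_vanishingOn (f : ι → Fin k) (A : Set ι) :
    coboundary F (pullback f (topForm F k)) ∈ vanishingOn F A (k + 1) := fun s _ => by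
  have h := mem_vanishingOn_of_ncard_lt Set.finite_univ (by simp [Set.ncard_univ])
    (coboundary F (topForm F k)) (f ∘ s) fun _ => Set.mem_univ _
  rw [coboundary_basisTuple] at h ⊢
  simpa only [pullback_basisTuple, Function.comp_assoc] using h

end TopForm

section SurvivingClass

section AwayIn

variable {R F : Type*} [CommRing R] [CommRing F] [Algebra R F]

lemma awayIn_pow_le (u : R) (k : ℕ) : awayIn R F (u ^ k) ≤ awayIn R F u := fun y hy => by
  obtain ⟨N, hN⟩ := hy.exists
  refine mem_awayIn_of_pow_smul_mem (M := k * N) dvd_rfl (one_le_awayIn ?_)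
  rwa [pow_mul]

lemma pow_dvd_of_smul_eq_algebraMap [IsDomain R] [FaithfulSMul R F] {x u a p : R} {y : F} {N : ℕ}
    (hx : Prime x) (hu : ¬ x ∣ u) (hy : y ∈ awayIn R F u) (ha : a • y = algebraMap R F p)
    (hxa : x ^ N ∣ a) : x ^ N ∣ p := by
  obtain ⟨M, hM⟩ := hy.exists
  obtain ⟨b, hb⟩ := Submodule.mem_one.1 hM
  have hpb : u ^ M * p = a * b := by
    apply FaithfulSMul.algebraMap_injective R F
    rw [map_mul, map_mul, hb, ← ha, ← Algebra.smul_def, ← Algebra.smul_def, smul_comm]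
  have huM : ¬ x ∣ u ^ M := fun h => hu (hx.dvd_of_dvd_pow h)
  exact hx.pow_dvd_of_dvd_mul_left N huM (hpb ▸ hxa.mul_right b)

end AwayIn

variable {K σ : Type*} [CommRing K]

lemma coeff_eq_zero_of_X_pow_dvd {m : σ →₀ ℕ} {v : σ} {N : ℕ} {p : MvPolynomial σ K}
    (hm : m v < N) (h : X v ^ N ∣ p) : coeff m p = 0 := by
  obtain ⟨q, rfl⟩ := h
  rw [X_pow_eq_monomial, coeff_monomial_mul', if_neg]
  exact fun hle => by simpa [hm.not_ge] using hle v

variable [Fintype σ]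

lemma awayIn_prod_sqfreeMonomial_le {F : Type*} [CommRing F] [Algebra (MvPolynomial σ K) F] {k : ℕ}
    (t : Fin k → Finset σ) : awayIn (MvPolynomial σ K) F (∏ j, sqfreeMonomial K (t j)) ≤
      awayIn _ F (sqfreeMonomial K Finset.univ) := by
  refine (awayIn_mono ?_).trans (awayIn_pow_le _ k)
  calc ∏ j, sqfreeMonomial K (t j) ∣ ∏ _j : Fin k, sqfreeMonomial K Finset.univ :=
        Finset.prod_dvd_prod_of_dvd _ _ fun j _ =>
          Finset.prod_dvd_prod_of_subset _ _ _ (Finset.subset_univ _)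
    _ = _ := by simp

variable (F : Type*) [Field F] [Algebra (MvPolynomial σ K) F] {ι : Type*} {k : ℕ}

/-- The cochain of multidegree `(-1, …, -1)` obtained by pulling back the orientation of a simplex
along a map on the edges. -/
noncomputable def inverseProdCochain (E : ι → Finset σ) (π : ι → Fin (k + 1)) :
    AltCochain F (MvPolynomial σ K) (k + 1) :=
  (algebraMap (MvPolynomial σ K) F (sqfreeMonomial K Finset.univ))⁻¹ •
    pullback (Function.extend (sqfreeMonomial K ∘ E) π 0) (topForm F (k + 1))

variable {F} {E : ι → Finset σ} {π : ι → Fin (k + 1)} [IsDomain K]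

lemma inverseProdCochain_basisTuple (hE : Function.Injective E) (s : Fin (k + 1) → ι) :
    inverseProdCochain F (K := K) E π (basisTuple F (sqfreeMonomial K ∘ E ∘ s)) =
      (algebraMap (MvPolynomial σ K) F (sqfreeMonomial K Finset.univ))⁻¹ *
        topForm F (k + 1) (basisTuple F (π ∘ s)) := by
  have hext : Function.extend (sqfreeMonomial K ∘ E) π 0 ∘ sqfreeMonomial K ∘ E ∘ s = π ∘ s :=
    funext fun j => (sqfreeMonomial_injective.comp hE).extend_apply π 0 (s j)
  rw [inverseProdCochain, AlternatingMap.smul_apply, pullback_basisTuple, hext, smul_eq_mul]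

variable [FaithfulSMul (MvPolynomial σ K) F]

lemma inverseProdCochain_mem_cechCochain (hE : Function.Injective E)
    (hπ : ∀ v, ∃ a, ∀ i, π i = a → v ∈ E i) : inverseProdCochain F (K := K) E π ∈
      cechCochain F (Set.range (sqfreeMonomial K ∘ E)) (k + 1) := fun s' hs' => by
  choose s hs using hs'
  obtain rfl : sqfreeMonomial K ∘ E ∘ s = s' := funext hs
  rw [inverseProdCochain_basisTuple hE]
  by_cases hinj : Function.Injective (π ∘ s)
  · have hdvd : sqfreeMonomial K Finset.univ ∣ ∏ j, (sqfreeMonomial K ∘ E ∘ s) j := by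
      refine sqfreeMonomial_dvd fun v _ => ?_
      obtain ⟨a, ha⟩ := hπ v
      obtain ⟨j, hj⟩ := Finite.surjective_of_injective hinj a
      exact (X_dvd_sqfreeMonomial.2 (ha (s j) hj)).trans <|
        Finset.dvd_prod_of_mem _ (Finset.mem_univ j)
    refine mem_awayIn_of_pow_smul_mem (M := 1) hdvd <| one_le_awayIn <|
      Submodule.mem_one.2 ⟨topForm _ _ (basisTuple _ (π ∘ s)), ?_⟩
    rw [map_topForm_basisTuple, pow_one, Algebra.smul_def, mul_inv_cancel_left₀]
    exact (FaithfulSMul.algebraMap_eq_zero_iff _ F).not.2 (sqfreeMonomial_ne_zero _)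
  · rw [topForm_basisTuple_of_not_injective hinj, mul_zero]
    exact zero_mem _

lemma exists_sum_eq_pow_mul_topForm_of_cechVanishes (hE : Function.Injective E)
    (hπ : ∀ v, ∃ a, ∀ i, π i = a → v ∈ E i)
    (hV : CechVanishes F (Set.range (sqfreeMonomial K ∘ E)) k) :
    ∃ (N : ℕ) (p : (Fin k → ι) → MvPolynomial σ K),
      (∀ t v, (∀ j, v ∉ E (t j)) → X v ^ (N + 1) ∣ p t) ∧ ∀ s : Fin (k + 1) → ι,
        ∑ j : Fin (k + 1), (-1) ^ (j : ℕ) * p (s ∘ j.succAbove) =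
          sqfreeMonomial K Finset.univ ^ N * topForm _ (k + 1) (basisTuple _ (π ∘ s)) := by
  have hP0 : algebraMap (MvPolynomial σ K) F (sqfreeMonomial K Finset.univ) ≠ 0 :=
    (FaithfulSMul.algebraMap_eq_zero_iff _ F).not.2 (sqfreeMonomial_ne_zero _)
  have hdc : coboundary F (inverseProdCochain F E π) ∈
      vanishingOn F (Set.range (sqfreeMonomial K ∘ E)) (k + 2) := by
    rw [inverseProdCochain, map_smul]
    exact Submodule.smul_mem _ _ (coboundary_pullback_topForm_mem_vanishingOn _ _)
  obtain ⟨b, hb, hcb⟩ := hV _ (inverseProdCochain_mem_cechCochain hE hπ) hdc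
  have hbt (t : Fin k → ι) := hb (sqfreeMonomial K ∘ E ∘ t) fun j => ⟨t j, rfl⟩
  have := Finite.of_injective E hE
  obtain ⟨N, hN⟩ := ((Filter.tendsto_add_atTop_nat 1).eventually (Filter.eventually_all.2 fun t =>
    awayIn_prod_sqfreeMonomial_le (E ∘ t) (hbt t))).exists
  choose p hp using fun t => Submodule.mem_one.1 (hN t)
  refine ⟨N, p, fun t v hv => ?_, fun s => FaithfulSMul.algebraMap_injective _ F ?_⟩
  · have hv' : ¬ X v ∣ ∏ j, (sqfreeMonomial K ∘ E ∘ t) j := fun h => by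
      obtain ⟨j, -, hj⟩ := (X_prime.dvd_finsetProd_iff _).1 h
      exact hv j (X_dvd_sqfreeMonomial.1 hj)
    exact pow_dvd_of_smul_eq_algebraMap X_prime hv' (hbt t) (hp t).symm
      (pow_dvd_pow_of_dvd (X_dvd_sqfreeMonomial.2 (Finset.mem_univ v)) _)
  · have hs := hcb (sqfreeMonomial K ∘ E ∘ s) fun j => ⟨s j, rfl⟩
    rw [AlternatingMap.sub_apply, sub_eq_zero, inverseProdCochain_basisTuple hE,
      coboundary_basisTuple] at hs
    rw [inv_mul_eq_iff_eq_mul₀ hP0] at hs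
    rw [map_mul, map_topForm_basisTuple, hs]
    simp only [map_sum, map_mul, map_pow, map_neg, map_one, hp, Algebra.smul_def, pow_succ,
      Finset.mul_sum, Function.comp_assoc]
    exact Finset.sum_congr rfl fun j _ => by ring

end SurvivingClass

/-- Compares the components of multidegree `(-1, …, -1)`, in which a Čech cochain is a `K`-valued
simplicial cochain supported on the families of edges covering all vertices. -/
lemma exists_sum_eq_topForm_of_cechVanishes {K σ ι F : Type*} [CommRing K] [IsDomain K] [Finite σ]
    [Field F] [Algebra (MvPolynomial σ K) F] [FaithfulSMul (MvPolynomial σ K) F]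
    {E : ι → Finset σ} {k : ℕ} {π : ι → Fin (k + 1)} (hE : Function.Injective E)
    (hπ : ∀ v, ∃ a, ∀ i, π i = a → v ∈ E i)
    (hV : CechVanishes F (Set.range (sqfreeMonomial K ∘ E)) k) :
    ∃ q : (Fin k → ι) → K, (∀ t v, (∀ j, v ∉ E (t j)) → q t = 0) ∧ ∀ s : Fin (k + 1) → ι,
      ∑ j : Fin (k + 1), (-1) ^ (j : ℕ) * q (s ∘ j.succAbove) =
        topForm K (k + 1) (basisTuple K (π ∘ s)) := by
  have := Fintype.ofFinite σ
  obtain ⟨N, p, hdvd, hp⟩ := exists_sum_eq_pow_mul_topForm_of_cechVanishes hE hπ hV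
  classical
  let m : σ →₀ ℕ := Finsupp.equivFunOnFinite.symm fun _ => N
  refine ⟨fun t => coeff m (p t), fun t v hv =>
    coeff_eq_zero_of_X_pow_dvd (Nat.lt_succ_self N) (hdvd t v hv), fun s => ?_⟩
  have hs := congrArg (coeff m) (hp s)
  have hsign (j : ℕ) : ((-1) ^ j : MvPolynomial σ K) = C ((-1) ^ j) := by simp
  simpa only [hsign, coeff_sum, coeff_C_mul, sqfreeMonomial_univ_pow, ← map_topForm_basisTuple C,
    mul_comm (monomial _ _), coeff_C_mul, coeff_monomial, m, ↓reduceIte, mul_one] using hs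

lemma lt_araRank_edgeIdeal {K σ : Type} [CommRing K] [IsDomain K] [IsNoetherianRing K] [Finite σ]
    {ι : Type*} {E : ι → Finset σ} {k : ℕ} {π : ι → Fin (k + 1)} (hE : Function.Injective E)
    (hπ : ∀ v, ∃ a, ∀ i, π i = a → v ∈ E i)
    (h : ∀ q : (Fin k → ι) → K, (∀ t, (∃ v, ∀ j, v ∉ E (t j)) → q t = 0) → ∃ s : Fin (k + 1) → ι,
      ∑ j : Fin (k + 1), (-1) ^ (j : ℕ) * q (s ∘ j.succAbove) ≠
        topForm K (k + 1) (basisTuple K (π ∘ s))) : k < araRank (edgeIdeal K E) := by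
  have := Finite.of_injective E hE
  obtain ⟨f, hf⟩ := exists_radical_span_range_eq (edgeIdeal K E)
  have h0 : 0 ∉ Set.range (sqfreeMonomial K ∘ E) := fun ⟨i, hi⟩ => sqfreeMonomial_ne_zero (E i) hi
  refine lt_of_radical_eq_of_not_cechVanishes (F := FractionRing (MvPolynomial σ K))
    (Set.finite_range _) h0 hf fun hV => ?_
  obtain ⟨q, hq, hqs⟩ := exists_sum_eq_topForm_of_cechVanishes hE hπ hV
  obtain ⟨s, hs⟩ := h q fun t ⟨v, hv⟩ => hq t v hv
  exact hs (hqs s)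

section Cycle

variable {n : ℕ}

/-- The edges of the `n`-cycle. -/
def cycleEdge (n : ℕ) (i : ZMod n) : Finset (ZMod n) := {i, i + 1}

lemma isTransversal_cycleEdge_iff {s : Set (ZMod n)} :
    IsTransversal (cycleEdge n) s ↔ ∀ i, i ∈ s ∨ i + 1 ∈ s := by
  simp [IsTransversal, cycleEdge]

lemma cycleIdeal_eq_edgeIdeal (K : Type) [Field K] (hn : 2 ≤ n) :
    cycleIdeal K n = edgeIdeal K (cycleEdge n) := by
  have : Fact (1 < n) := ⟨hn⟩
  have hprod (i : ZMod n) : sqfreeMonomial K (cycleEdge n i) = X i * X (i + 1) :=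
    Finset.prod_pair (by simp)
  simp only [cycleIdeal, edgeIdeal, Function.comp_def, hprod]

variable [NeZero n]

lemma le_two_mul_card_of_isTransversal {s : Finset (ZMod n)}
    (hs : IsTransversal (cycleEdge n) (s : Set (ZMod n))) : n ≤ 2 * s.card := by
  rw [isTransversal_cycleEdge_iff] at hs
  have hcard : sᶜ.card ≤ s.card := Finset.card_le_card_of_injOn (· + 1)
    (fun i hi => (hs i).resolve_left (by simpa using hi)) (add_left_injective 1).injOn
  rw [Finset.card_compl, ZMod.card] at hcard
  omega

lemma exists_isTransversal_card_le :
    ∃ s : Finset (ZMod n), IsTransversal (cycleEdge n) (s : Set (ZMod n)) ∧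
      s.card ≤ (n + 1) / 2 := by
  refine ⟨(Finset.range ((n + 1) / 2)).image fun k => ((2 * k + 1 : ℕ) : ZMod n),
    isTransversal_cycleEdge_iff.2 fun i => ?_, Finset.card_image_le.trans (by simp)⟩
  have hi := i.val_lt
  have hk : i.val / 2 < (n + 1) / 2 := by omega
  rw [Finset.coe_image]
  rcases Nat.even_or_odd' i.val with ⟨k, hik | hik⟩
  · refine Or.inr ⟨k, Finset.mem_coe.2 (Finset.mem_range.2 (by omega)), ?_⟩
    simp only [← hik, Nat.cast_succ, ZMod.natCast_zmod_val]
  · refine Or.inl ⟨k, Finset.mem_coe.2 (Finset.mem_range.2 (by omega)), ?_⟩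
    simp only [← hik, ZMod.natCast_zmod_val]

lemma val_add_one_eq_ite (i : ZMod n) : (i + 1).val = if i.val + 1 = n then 0 else i.val + 1 := by
  have hi := i.val_lt
  rw [ZMod.val_add, ZMod.val_one_eq_one_mod, Nat.add_mod_mod]
  split_ifs with h
  · rw [h, Nat.mod_self]
  · exact Nat.mod_eq_of_lt (by omega)

lemma val_sub_one_eq_ite (i : ZMod n) : (i - 1).val = if i.val = 0 then n - 1 else i.val - 1 := by
  have h := val_add_one_eq_ite (i - 1)
  rw [sub_add_cancel] at h
  split_ifs at h ⊢ <;> omega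

/-- An independent set of the `n`-cycle, maximal for `n = 6` and for `8 ≤ n`: the gaps between its
successive elements are `3, 3, 2, …, 2`, and the gap closing the cycle is `2` or `3`. -/
def gapThreeSet (n : ℕ) : Finset (ZMod n) :=
  (Finset.range (n / 2 - 1)).image fun k => ((2 * k + min k 2 : ℕ) : ZMod n)

lemma mem_gapThreeSet (hn : 6 ≤ n) {i : ZMod n} : i ∈ gapThreeSet n ↔
    i.val = 0 ∨ i.val = 3 ∨ 6 ≤ i.val ∧ Even i.val ∧ i.val + 2 ≤ n := by
  simp only [gapThreeSet, Finset.mem_image, Finset.mem_range, Nat.even_iff]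
  constructor
  · rintro ⟨k, hk, rfl⟩
    rw [ZMod.val_natCast_of_lt (by omega)]
    omega
  · intro h
    have hi : 2 * ((i.val - 1) / 2) + min ((i.val - 1) / 2) 2 = i.val := by omega
    exact ⟨(i.val - 1) / 2, by omega, by rw [hi, ZMod.natCast_zmod_val]⟩

lemma isTransversal_compl_gapThreeSet (hn : 6 ≤ n) :
    IsTransversal (cycleEdge n) ((gapThreeSet n)ᶜ : Set (ZMod n)) := by
  refine isTransversal_cycleEdge_iff.2 fun i => not_and_or.1 fun ⟨hi, hi'⟩ => ?_
  simp only [Finset.mem_coe, mem_gapThreeSet hn, val_add_one_eq_ite, Nat.even_iff] at hi hi'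
  grind

lemma add_one_mem_or_sub_one_mem_gapThreeSet (hn : n = 6 ∨ 8 ≤ n) {i : ZMod n}
    (hi : i ∉ gapThreeSet n) : i + 1 ∈ gapThreeSet n ∨ i - 1 ∈ gapThreeSet n := by
  have hlt := i.val_lt
  have h6 : 6 ≤ n := by omega
  simp only [mem_gapThreeSet h6, val_add_one_eq_ite, val_sub_one_eq_ite, Nat.even_iff] at hi ⊢
  split_ifs <;> omega

lemma exists_minimal_isTransversal_lt_card (hn : n = 6 ∨ 8 ≤ n) : ∃ s : Finset (ZMod n),
    Minimal (IsTransversal (cycleEdge n)) (s : Set (ZMod n)) ∧ (n + 1) / 2 < s.card := by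
  refine ⟨(gapThreeSet n)ᶜ, ?_, ?_⟩
  · rw [Finset.coe_compl]
    refine (isTransversal_compl_gapThreeSet (by omega)).minimal fun i hi => ?_
    rcases add_one_mem_or_sub_one_mem_gapThreeSet hn hi with h | h
    · exact ⟨i, by simp [cycleEdge, h]⟩
    · exact ⟨i - 1, by simp [cycleEdge, h]⟩
  · have hcard : (gapThreeSet n).card ≤ n / 2 - 1 := Finset.card_image_le.trans (by simp)
    rw [Finset.card_compl, ZMod.card]
    omega

end Cycle

section FewGenerators

lemma mem_and_mem_of_add_mem_of_mul_mem {R : Type*} [CommRing R] {p : Ideal R} [hp : p.IsPrime]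
    {a b : R} (hadd : a + b ∈ p) (hmul : a * b ∈ p) : a ∈ p ∧ b ∈ p :=
  (hp.mem_or_mem hmul).elim (fun h => ⟨h, (add_mem_cancel_left h).1 hadd⟩)
    fun h => ⟨(add_mem_cancel_right h).1 hadd, h⟩

variable (K : Type) [Field K]

lemma araRank_cycleIdeal_three_le : araRank (cycleIdeal K 3) ≤ 2 := by
  have hmem (i : ZMod 3) : X i * X (i + 1) ∈ cycleIdeal K 3 := Ideal.subset_span ⟨i, rfl⟩
  refine araRank_le ![X 0 * X 1, X 1 * X 2 + X 2 * X 0] (Fin.forall_fin_two.2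
    ⟨hmem 0, add_mem (hmem 1) (hmem 2)⟩) fun p hp hf => ?_
  obtain ⟨h01, hadd⟩ := Fin.forall_fin_two.1 hf
  have hmul : X 1 * X 2 * (X 2 * X 0) ∈ p := by
    convert Ideal.mul_mem_left p (X 2 ^ 2) h01 using 1
    simp only [Matrix.cons_val_zero]
    ring
  obtain ⟨h12, h20⟩ := mem_and_mem_of_add_mem_of_mul_mem hadd hmul
  rw [cycleIdeal, Ideal.span_le, Set.range_subset_iff]
  intro i
  fin_cases i
  exacts [h01, h12, h20]

lemma araRank_cycleIdeal_five_le : araRank (cycleIdeal K 5) ≤ 3 := by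
  have hmem (i : ZMod 5) : X i * X (i + 1) ∈ cycleIdeal K 5 := Ideal.subset_span ⟨i, rfl⟩
  refine araRank_le ![X 0 * X 1, X 2 * X 3 + X 4 * X 0, X 1 * X 2 + X 3 * X 4] (fun j => ?_)
    fun p hp hf => ?_
  · fin_cases j
    exacts [hmem 0, add_mem (hmem 2) (hmem 4), add_mem (hmem 1) (hmem 3)]
  · have h01 : X 0 * X 1 ∈ p := hf 0
    have hadd : X 2 * X 3 + X 4 * X 0 ∈ p := hf 1
    have hadd' : X 1 * X 2 + X 3 * X 4 ∈ p := hf 2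
    have hedges : (X 2 * X 3 ∈ p ∧ X 4 * X 0 ∈ p) ∧ X 1 * X 2 ∈ p ∧ X 3 * X 4 ∈ p := by
      rcases hp.mem_or_mem h01 with h0 | h1
      · have h40 := p.mul_mem_left (X 4) h0
        have h23 := (add_mem_cancel_right h40).1 hadd
        refine ⟨⟨h23, h40⟩, mem_and_mem_of_add_mem_of_mul_mem hadd' ?_⟩
        convert p.mul_mem_left (X 1 * X 4) h23 using 1
        ring
      · have h12 := p.mul_mem_right (X 2) h1
        have h34 := (add_mem_cancel_left h12).1 hadd'
        refine ⟨mem_and_mem_of_add_mem_of_mul_mem hadd ?_, h12, h34⟩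
        convert p.mul_mem_left (X 2 * X 0) h34 using 1
        ring
    rw [cycleIdeal, Ideal.span_le, Set.range_subset_iff]
    intro i
    fin_cases i
    exacts [h01, hedges.2.1, hedges.1.1, hedges.2.2, hedges.1.2]

end FewGenerators

section CohomologicalBound

lemma sum_comp_succAbove_three {R α : Type*} [CommRing R] (q : (Fin 2 → α) → R) (s : Fin 3 → α) :
    ∑ j : Fin 3, (-1) ^ (j : ℕ) * q (s ∘ j.succAbove) =
      q ![s 1, s 2] - q ![s 0, s 2] + q ![s 0, s 1] := by
  have hface (j : Fin 3) : s ∘ j.succAbove = ![s (j.succAbove 0), s (j.succAbove 1)] :=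
    (FinVec.etaExpand_eq _).symm
  simp [hface, Fin.sum_univ_three, sub_eq_add_neg, Fin.succAbove]

lemma sum_comp_succAbove_five {R α : Type*} [CommRing R] (q : (Fin 4 → α) → R) (s : Fin 5 → α) :
    ∑ j : Fin 5, (-1) ^ (j : ℕ) * q (s ∘ j.succAbove) =
      q ![s 1, s 2, s 3, s 4] - q ![s 0, s 2, s 3, s 4] + q ![s 0, s 1, s 3, s 4] -
        q ![s 0, s 1, s 2, s 4] + q ![s 0, s 1, s 2, s 3] := by
  have hface (j : Fin 5) : s ∘ j.succAbove =
      ![s (j.succAbove 0), s (j.succAbove 1), s (j.succAbove 2), s (j.succAbove 3)] :=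
    (FinVec.etaExpand_eq _).symm
  simp [hface, Fin.sum_univ_five, sub_eq_add_neg, Fin.succAbove, pow_succ]

variable (K : Type) [Field K]

/-- Edge labels such that each vertex is covered by every edge carrying some fixed label. -/
def fourCycleLabel : ZMod 4 → Fin 3 := ![0, 0, 1, 2]

lemma two_lt_araRank_cycleIdeal_four : 2 < araRank (cycleIdeal K 4) := by
  rw [cycleIdeal_eq_edgeIdeal K (by norm_num)]
  refine lt_araRank_edgeIdeal (π := fourCycleLabel) (by decide) (by decide) fun q hq => ?_
  by_contra! hqs
  have hface (s : Fin 3 → ZMod 4) := (sum_comp_succAbove_three q s).symm.trans (hqs s)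
  have h012 : q ![1, 2] - q ![0, 2] + q ![0, 1] = 0 :=
    (hface ![0, 1, 2]).trans (topForm_basisTuple_of_not_injective (by decide))
  have h023 : q ![2, 3] - q ![0, 3] + q ![0, 2] = 1 := (hface ![0, 2, 3]).trans <| by
    rw [show fourCycleLabel ∘ ![0, 2, 3] = id by decide, topForm_basisTuple_id]
  rw [hq ![1, 2] (by decide), hq ![0, 1] (by decide)] at h012
  rw [hq ![2, 3] (by decide), hq ![0, 3] (by decide)] at h023
  exact zero_ne_one' K (by linear_combination h012 + h023)

/-- Edge labels such that each vertex is covered by every edge carrying some fixed label. -/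
def sevenCycleLabel : ZMod 7 → Fin 5 := ![0, 0, 1, 2, 3, 3, 4]

lemma four_lt_araRank_cycleIdeal_seven : 4 < araRank (cycleIdeal K 7) := by
  rw [cycleIdeal_eq_edgeIdeal K (by norm_num)]
  refine lt_araRank_edgeIdeal (π := sevenCycleLabel) (by decide) (by decide) fun q hq => ?_
  by_contra! hqs
  have hface (s : Fin 5 → ZMod 7) := (sum_comp_succAbove_five q s).symm.trans (hqs s)
  have h01235 : q ![1, 2, 3, 5] - q ![0, 2, 3, 5] + q ![0, 1, 3, 5] - q ![0, 1, 2, 5] +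
      q ![0, 1, 2, 3] = 0 :=
    (hface ![0, 1, 2, 3, 5]).trans (topForm_basisTuple_of_not_injective (by decide))
  have h01345 : q ![1, 3, 4, 5] - q ![0, 3, 4, 5] + q ![0, 1, 4, 5] - q ![0, 1, 3, 5] +
      q ![0, 1, 3, 4] = 0 :=
    (hface ![0, 1, 3, 4, 5]).trans (topForm_basisTuple_of_not_injective (by decide))
  have h02356 : q ![2, 3, 5, 6] - q ![0, 3, 5, 6] + q ![0, 2, 5, 6] - q ![0, 2, 3, 6] +
      q ![0, 2, 3, 5] = 1 := (hface ![0, 2, 3, 5, 6]).trans <| by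
    rw [show sevenCycleLabel ∘ ![0, 2, 3, 5, 6] = id by decide, topForm_basisTuple_id]
  rw [hq ![1, 2, 3, 5] (by decide), hq ![0, 1, 2, 5] (by decide), hq ![0, 1, 2, 3] (by decide)]
    at h01235
  rw [hq ![1, 3, 4, 5] (by decide), hq ![0, 3, 4, 5] (by decide), hq ![0, 1, 4, 5] (by decide),
    hq ![0, 1, 3, 4] (by decide)] at h01345
  rw [hq ![2, 3, 5, 6] (by decide), hq ![0, 3, 5, 6] (by decide), hq ![0, 2, 5, 6] (by decide),
    hq ![0, 2, 3, 6] (by decide)] at h02356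
  exact zero_ne_one' K (by linear_combination h01235 + h01345 + h02356)

end CohomologicalBound

section CycleIdeal

variable (K : Type) [Field K] {n : ℕ}

lemma idealHeight_cycleIdeal (hn : 2 ≤ n) : idealHeight (cycleIdeal K n) = ((n + 1) / 2 : ℕ) := by
  have : NeZero n := ⟨by omega⟩
  rw [cycleIdeal_eq_edgeIdeal K hn]
  refine le_antisymm ?_ (le_idealHeight_edgeIdeal fun s hs => ?_)
  · obtain ⟨s, hs, hcard⟩ := exists_isTransversal_card_le (n := n)
    exact (idealHeight_edgeIdeal_le hs).trans (Nat.cast_le.2 hcard)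
  · have := le_two_mul_card_of_isTransversal hs
    omega

lemma cycleIdeal_ne_top (hn : 2 ≤ n) : cycleIdeal K n ≠ ⊤ := by
  rw [cycleIdeal_eq_edgeIdeal K hn]
  have hle : edgeIdeal K (cycleEdge n) ≤ varIdeal K Set.univ :=
    edgeIdeal_le_varIdeal_iff.2 (isTransversal_cycleEdge_iff.2 fun i => Or.inl (Set.mem_univ i))
  exact ne_top_of_le_ne_top (varIdeal_isPrime _).ne_top hle

lemma lt_araRank_cycleIdeal (hn : n = 6 ∨ 8 ≤ n) : (n + 1) / 2 < araRank (cycleIdeal K n) := by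
  have : NeZero n := ⟨by omega⟩
  obtain ⟨s, hs, hcard⟩ := exists_minimal_isTransversal_lt_card hn
  rw [cycleIdeal_eq_edgeIdeal K (by omega)]
  exact hcard.trans_le (card_le_araRank_edgeIdeal hs)

end CycleIdeal

/-- For `n ≥ 3`, the edge ideal of the `n`-cycle is a set-theoretic complete
intersection (its arithmetical rank equals its height) if and only if `n = 3` or `n = 5`. -/
theorem cycle_stci_iff (K : Type) [Field K] (n : ℕ) (hn : 3 ≤ n) :
    ((araRank (cycleIdeal K n) : ℕ∞) = idealHeight (cycleIdeal K n)) ↔ (n = 3 ∨ n = 5) := by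
  have : NeZero n := ⟨by omega⟩
  rw [idealHeight_cycleIdeal K (by omega), Nat.cast_inj]
  constructor
  · intro h
    by_contra! hn35
    have hlt : (n + 1) / 2 < araRank (cycleIdeal K n) := by
      obtain rfl | rfl | hn6 : n = 4 ∨ n = 7 ∨ n = 6 ∨ 8 ≤ n := by omega
      · exact two_lt_araRank_cycleIdeal_four K
      · exact four_lt_araRank_cycleIdeal_seven K
      · exact lt_araRank_cycleIdeal K hn6
    exact hlt.ne' h
  · intro h
    have hge := idealHeight_le_araRank (cycleIdeal_ne_top K (by omega : 2 ≤ n))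
    rw [idealHeight_cycleIdeal K (by omega), Nat.cast_le] at hge
    refine le_antisymm ?_ hge
    rcases h with rfl | rfl
    · exact araRank_cycleIdeal_three_le K
    · exact araRank_cycleIdeal_five_le K
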